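/- arXiv:math/0702830 — 4 statements merged into one kernel-verified Lean document; each statement's English description precedes it below -/
import Mathlib

section
/- For every γ with γ > 1/2 and γ ≠ 1, and every σ > 0, the Fisher information for the scale parameter of the GPD is infinite: the integral over (0, σ/γ) of s(x)² · g(x; γ, σ) dx diverges (equals +∞), where s(x) = −1/σ + (1/γ − 1)·γx/(σ(σ − γx)) is the score ∂/∂σ log g(x; γ, σ). -/
open MeasureTheory

/-- The density of the generalized Pareto distribution (GPD):
`g(x) = (1/σ)(1 - γx/σ)^(1/γ - 1)` (real power); for `γ > 0` its support is `(0, σ/γ)`. -/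
noncomputable def gpdPdf (γ σ x : ℝ) : ℝ :=
  (1 / σ) * (1 - γ * x / σ) ^ (1 / γ - 1)

/-- The score for the scale parameter of the GPD,
`s(x) = ∂/∂σ log g(x; γ, σ) = −1/σ + (1/γ − 1)·γx/(σ(σ − γx))`. -/
noncomputable def gpdScaleScore (γ σ x : ℝ) : ℝ :=
  -1 / σ + (1 / γ - 1) * (γ * x) / (σ * (σ - γ * x))

lemma gpd_aux_lower (γ σ x : ℝ) (hγ : 1 / 2 < γ) (hσ : 0 < σ)
    (hu : 0 < 1 - γ * x / σ) (hu1 : 1 - γ * x / σ ≤ 1)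
    (hu2 : 1 - γ * x / σ ≤ γ * |1 / γ - 1| / 2) :
    ((1 / γ - 1) ^ 2 / (4 * σ ^ 3) * (σ / γ)) * (σ / γ - x)⁻¹ ≤
      (gpdScaleScore γ σ x) ^ 2 * gpdPdf γ σ x := by
  have hγ0 : 0 < γ := by linarith
  unfold gpdScaleScore gpdPdf
  obtain ⟨u, hudef⟩ : ∃ u, u = 1 - γ * x / σ := ⟨_, rfl⟩
  rw [← hudef] at hu hu1 hu2 ⊢
  have hx : x = σ * (1 - u) / γ := by rw [hudef]; field_simp; ring
  obtain ⟨c, hc⟩ : ∃ c, c = 1 / γ - 1 := ⟨_, rfl⟩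
  rw [← hc] at hu2 ⊢
  have hc1 : c < 1 := by
    have : 1 / γ < 2 := by rw [div_lt_iff₀ hγ0]; linarith
    linarith
  have hs : -1 / σ + c * (γ * x) / (σ * (σ - γ * x)) = (c - u / γ) / (σ * u) := by
    have h1 : γ * x = σ * (1 - u) := by rw [hx]; field_simp
    have h2 : σ - γ * x = σ * u := by rw [h1]; ring
    have h3 : u / γ = (1 + c) * u := by rw [hc]; ring
    rw [h2, h1, h3]; field_simp; ring
  have hb : σ / γ - x = σ / γ * u := by rw [hx]; field_simp; ring
  rw [hs, hb]
  have h4 : u / γ ≤ |c| / 2 := by rw [div_le_iff₀ hγ0]; linarith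
  have h5 : c ^ 2 / 4 ≤ (c - u / γ) ^ 2 := by
    have h6 : |c| / 2 ≤ |c - u / γ| := by
      have := abs_sub_abs_le_abs_sub c (u / γ)
      have h7 : |u / γ| = u / γ := abs_of_pos (by positivity)
      linarith
    have h8 := pow_le_pow_left₀ (by positivity) h6 2
    rw [sq_abs, div_pow, sq_abs] at h8
    linarith
  have h9 : u ≤ u ^ c := by
    simpa using Real.rpow_le_rpow_of_exponent_ge hu hu1 hc1.le
  calc (c ^ 2 / (4 * σ ^ 3) * (σ / γ)) * (σ / γ * u)⁻¹
      = (c ^ 2 / 4) / (σ * u) ^ 2 * (1 / σ * u) := by field_simp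
    _ ≤ (c - u / γ) ^ 2 / (σ * u) ^ 2 * (1 / σ * u ^ c) := by gcongr
    _ = _ := by rw [div_pow]

lemma gpd_aux_top (a b K : ℝ) (hab : a < b) (hK : 0 < K) :
    ∫⁻ x in Set.Ioo a b, ENNReal.ofReal (K * (b - x)⁻¹) = ⊤ := by
  by_contra h
  have hm : Measurable fun x : ℝ => K * (b - x)⁻¹ := by fun_prop
  have hi : IntegrableOn (fun x : ℝ => K * (b - x)⁻¹) (Set.Ioo a b) := by
    refine ⟨hm.aestronglyMeasurable, ?_⟩
    rw [hasFiniteIntegral_iff_ofReal]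
    · exact lt_top_iff_ne_top.2 h
    · filter_upwards [ae_restrict_mem measurableSet_Ioo] with x hx
      have : 0 < b - x := by linarith [hx.2]
      simp only [Pi.zero_apply]; positivity
  rw [← intervalIntegrable_iff_integrableOn_Ioo_of_le hab.le] at hi
  have h2 := hi.const_mul (-K⁻¹)
  have h3 : (fun x : ℝ => -K⁻¹ * (K * (b - x)⁻¹)) = fun x => (x - b)⁻¹ := by
    funext x
    rw [← neg_sub x b, inv_neg]; field_simp
  rw [h3, intervalIntegrable_sub_inv_iff] at h2
  rcases h2 with h2 | h2
  · exact hab.ne h2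
  · exact h2 Set.right_mem_uIcc

/-- For every `γ` with `γ > 1/2` and `γ ≠ 1`, and every `σ > 0`, the Fisher
information for the scale parameter of the GPD is infinite: the (Lebesgue)
integral over `(0, σ/γ)` of `s(x)² · g(x; γ, σ)` diverges to `+∞`. -/
theorem gpd_scale_fisher_information_infinite (γ σ : ℝ)
    (hγ : 1 / 2 < γ) (hγ1 : γ ≠ 1) (hσ : 0 < σ) :
    ∫⁻ x in Set.Ioo 0 (σ / γ),
      ENNReal.ofReal ((gpdScaleScore γ σ x) ^ 2 * gpdPdf γ σ x) = ⊤ := by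
  have hγ0 : 0 < γ := by linarith
  have hc : 1 / γ - 1 ≠ 0 := by
    intro h
    apply hγ1
    field_simp at h
    linarith
  have hc' : 0 < |1 / γ - 1| := abs_pos.2 hc
  obtain ⟨δ, hδ⟩ : ∃ δ, δ = min 1 (γ * |1 / γ - 1| / 2) := ⟨_, rfl⟩
  have hδ0 : 0 < δ := by rw [hδ]; exact lt_min one_pos (by positivity)
  have hδ1 : δ ≤ 1 := by rw [hδ]; exact min_le_left _ _
  have hδ2 : δ ≤ γ * |1 / γ - 1| / 2 := by rw [hδ]; exact min_le_right _ _
  have hb : 0 < σ / γ := by positivity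
  have ha0 : 0 ≤ σ / γ * (1 - δ) := mul_nonneg hb.le (by linarith)
  have hab : σ / γ * (1 - δ) < σ / γ := by nlinarith
  have hK : 0 < (1 / γ - 1) ^ 2 / (4 * σ ^ 3) * (σ / γ) := by positivity
  rw [eq_top_iff, ← gpd_aux_top _ _ _ hab hK]
  refine le_trans (setLIntegral_mono' measurableSet_Ioo ?_)
    (lintegral_mono_set (Set.Ioo_subset_Ioo_left ha0))
  intro x hx
  apply ENNReal.ofReal_le_ofReal
  have e : γ * x / σ = x / (σ / γ) := by field_simp
  have h1 : γ * x / σ < 1 := by rw [e, div_lt_one hb]; exact hx.2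
  have h2 : 1 - δ < γ * x / σ := by
    rw [e, lt_div_iff₀ hb]; linarith [hx.1]
  exact gpd_aux_lower γ σ x hγ hσ (by linarith) (by linarith) (by linarith)
end

section
/- For every γ with γ > 1/2 and γ ≠ 1, every μ ∈ ℝ and every σ > 0, the Fisher information for the location parameter of the GEV is infinite: writing u(x) = 1 − γ(x−μ)/σ, the integral over {x : u(x) > 0} of s(x)² · h(x; γ, μ, σ) dx diverges (equals +∞), where s(x) = (γ/σ)·[(1/γ − 1)/u(x) − (1/γ)·u(x)^{1/γ − 1}] is the score ∂/∂μ log h(x; γ, μ, σ). -/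
open MeasureTheory

/-- The density of the generalized extreme value (GEV) distribution:
`h(x) = (1/σ)(1 - γ(x-μ)/σ)^(1/γ - 1) exp (-(1 - γ(x-μ)/σ)^(1/γ))` (real powers). -/
noncomputable def gevPdf (γ μ σ x : ℝ) : ℝ :=
  (1 / σ) * (1 - γ * (x - μ) / σ) ^ (1 / γ - 1) *
    Real.exp (-(1 - γ * (x - μ) / σ) ^ (1 / γ))

/-- The score for the location parameter of the GEV: writing
`u(x) = 1 - γ(x-μ)/σ`,
`s(x) = ∂/∂μ log h(x; γ, μ, σ) = (γ/σ)·[(1/γ − 1)/u(x) − (1/γ)·u(x)^(1/γ − 1)]`. -/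
noncomputable def gevLocScore (γ μ σ x : ℝ) : ℝ :=
  (γ / σ) * ((1 / γ - 1) / (1 - γ * (x - μ) / σ) -
    (1 / γ) * (1 - γ * (x - μ) / σ) ^ (1 / γ - 1))

lemma gev_aux_delta (p : ℝ) (hp : 0 < p) (hp1 : p ≠ 1) :
    ∃ δ > 0, δ ≤ 1 ∧ ∀ u : ℝ, 0 < u → u < δ → p * u ^ p ≤ |p - 1| / 2 := by
  have hc : ContinuousAt (fun u : ℝ => p * u ^ p) 0 :=
    (Real.continuousAt_rpow_const 0 p (Or.inr hp.le)).const_mul p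
  have hpos : 0 < |p - 1| / 2 := by
    have := abs_pos.mpr (sub_ne_zero.mpr hp1)
    positivity
  obtain ⟨δ, hδ, h⟩ := Metric.continuousAt_iff.mp hc _ hpos
  refine ⟨min δ 1, lt_min hδ one_pos, min_le_right _ _, fun u hu hud => ?_⟩
  have := h (x := u) (by
    rw [Real.dist_eq, sub_zero, abs_of_pos hu]; exact hud.trans_le (min_le_left _ _))
  simp only [Real.dist_eq, Real.zero_rpow hp.ne', mul_zero, sub_zero] at this
  exact (le_abs_self _).trans this.le

lemma gev_aux_bound (p c s u : ℝ) (hp : 0 < p) (hp2 : p < 2) (hs : 0 < s)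
    (hu : 0 < u) (hu1 : u ≤ 1) (h : p * u ^ p ≤ |p - 1| / 2) :
    (c ^ 2 * (|p - 1| / 2) ^ 2 * (1 / s) * Real.exp (-1)) * u⁻¹ ≤
      (c * ((p - 1) / u - p * u ^ (p - 1))) ^ 2 * ((1 / s) * u ^ (p - 1) * Real.exp (-u ^ p)) := by
  have e1 : u ^ (p - 1) = u ^ p / u := by rw [Real.rpow_sub hu, Real.rpow_one]
  have e2 : c * ((p - 1) / u - p * u ^ (p - 1)) = c * (p - 1 - p * u ^ p) * u⁻¹ := by
    rw [e1]; field_simp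
  have h0 : 0 ≤ p * u ^ p := by positivity
  have hB : (|p - 1| / 2) ^ 2 ≤ (p - 1 - p * u ^ p) ^ 2 := by
    apply sq_le_sq.mpr
    rw [abs_of_nonneg (by positivity : (0:ℝ) ≤ |p - 1| / 2)]
    have := abs_sub_abs_le_abs_sub (p - 1) (p * u ^ p)
    rw [abs_of_nonneg h0] at this
    linarith
  have hup : u ≤ u ^ (p - 1) := by
    conv_lhs => rw [← Real.rpow_one u]
    exact Real.rpow_le_rpow_of_exponent_ge hu hu1 (by linarith)
  have hex : Real.exp (-1) ≤ Real.exp (-u ^ p) := by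
    apply Real.exp_le_exp.mpr
    have := Real.rpow_le_one hu.le hu1 hp.le
    linarith
  rw [e2]
  calc _ = (c ^ 2 * (|p - 1| / 2) ^ 2 * (u⁻¹) ^ 2) * ((1 / s) * u * Real.exp (-1)) := by
        field_simp
    _ ≤ (c ^ 2 * (p - 1 - p * u ^ p) ^ 2 * (u⁻¹) ^ 2) *
          ((1 / s) * u ^ (p - 1) * Real.exp (-u ^ p)) := by gcongr
    _ = _ := by ring

/-- For every `γ` with `γ > 1/2` and `γ ≠ 1`, every `μ ∈ ℝ` and every `σ > 0`,
the Fisher information for the location parameter of the GEV is infinite: the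
(Lebesgue) integral over the support `{x : 1 - γ(x-μ)/σ > 0}` of
`s(x)² · h(x; γ, μ, σ)` diverges to `+∞`. -/
theorem gev_location_fisher_information_infinite (γ μ σ : ℝ)
    (hγ : 1 / 2 < γ) (hγ1 : γ ≠ 1) (hσ : 0 < σ) :
    ∫⁻ x in {x : ℝ | 0 < 1 - γ * (x - μ) / σ},
      ENNReal.ofReal ((gevLocScore γ μ σ x) ^ 2 * gevPdf γ μ σ x) = ⊤ := by
  have hγ0 : 0 < γ := by linarith
  have hp : 0 < 1 / γ := by positivity
  have hp2 : 1 / γ < 2 := by rw [div_lt_iff₀ hγ0]; linarith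
  have hp1 : 1 / γ ≠ 1 := by
    intro h; rw [div_eq_iff hγ0.ne'] at h; exact hγ1 (by linarith)
  obtain ⟨δ, hδ, hδ1, hb⟩ := gev_aux_delta (1 / γ) hp hp1
  by_contra hne
  set b : ℝ := μ + σ / γ with hbdef
  set a : ℝ := b - δ * σ / γ with hadef
  have hab : a < b := by
    have : 0 < δ * σ / γ := by positivity
    linarith
  have hu : ∀ x, 1 - γ * (x - μ) / σ = (γ / σ) * (b - x) := by
    intro x; rw [hbdef]; field_simp; ring
  set C : ℝ := (γ / σ) ^ 2 * (|1 / γ - 1| / 2) ^ 2 * (1 / σ) * Real.exp (-1) with hC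
  have hCpos : 0 < C := by
    have := abs_pos.mpr (sub_ne_zero.mpr hp1)
    positivity
  have hsub : Set.Ioo a b ⊆ {x : ℝ | 0 < 1 - γ * (x - μ) / σ} := by
    intro x hx
    have : 0 < b - x := sub_pos.mpr hx.2
    simp only [Set.mem_ofPred_eq, hu]
    positivity
  have hpt : ∀ x ∈ Set.Ioo a b, ENNReal.ofReal (C * ((γ / σ) * (b - x))⁻¹) ≤
      ENNReal.ofReal ((gevLocScore γ μ σ x) ^ 2 * gevPdf γ μ σ x) := by
    intro x hx
    have hx0 : 0 < (γ / σ) * (b - x) := by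
      have : 0 < b - x := sub_pos.mpr hx.2
      positivity
    have hxd : (γ / σ) * (b - x) < δ := by
      have h1 : b - x < δ * σ / γ := by have := hx.1; linarith
      calc (γ / σ) * (b - x) < (γ / σ) * (δ * σ / γ) := by gcongr
        _ = δ := by field_simp
    apply ENNReal.ofReal_le_ofReal
    unfold gevLocScore gevPdf
    rw [hu]
    exact gev_aux_bound (1 / γ) (γ / σ) σ _ hp hp2 hσ hx0 (hxd.le.trans hδ1) (hb _ hx0 hxd)
  clear_value C
  have hfin : ∫⁻ x in Set.Ioo a b, ENNReal.ofReal (C * ((γ / σ) * (b - x))⁻¹) ≠ ⊤ := by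
    refine ne_top_of_le_ne_top hne ?_
    exact (setLIntegral_mono' measurableSet_Ioo hpt).trans (lintegral_mono_set hsub)
  have hint : IntegrableOn (fun x => C * ((γ / σ) * (b - x))⁻¹) (Set.Ioo a b) := by
    refine (lintegral_ofReal_ne_top_iff_integrable ?_ ?_).mp hfin
    · exact Measurable.aestronglyMeasurable (by fun_prop)
    · refine (ae_restrict_iff' measurableSet_Ioo).mpr (Filter.Eventually.of_forall fun x hx => ?_)
      have : 0 < b - x := sub_pos.mpr hx.2
      simp only [Pi.zero_apply]
      positivity
  have hint2 : IntervalIntegrable (fun x => (x - b)⁻¹) volume a b := by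
    rw [intervalIntegrable_iff_integrableOn_Ioo_of_le hab.le]
    refine (hint.const_mul (-(C⁻¹ * (γ / σ)))).congr (Filter.Eventually.of_forall fun x => ?_)
    simp only
    rw [← neg_sub x b, mul_inv (γ / σ), inv_neg]
    generalize (x - b)⁻¹ = y
    field_simp
  rw [intervalIntegrable_sub_inv_iff] at hint2
  rcases hint2 with h | h
  · exact hab.ne h
  · exact h Set.right_mem_uIcc
end

section
/- Fix γ > 0, σ > 0 and an ordered sample x_1 < x_2 < ⋯ < x_n of reals. As μ decreases to x_n − σ/γ (equivalently, as the upper endpoint μ + σ/γ decreases to the largest observation x_n), the maximum product of spacings objective for the GEV, M(γ, μ, σ) = −∑_{i=1}^{n+1} log[H(x_i; γ, μ, σ) − H(x_{i−1}; γ, μ, σ)] with H(x_0) ≡ 0 and H(x_{n+1}) ≡ 1, tends to +∞; hence the MPS objective does not collapse at the boundary of the parameter space. -/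
/-- The cdf of the generalized extreme value (GEV) distribution:
`H(x) = exp (-(1 - γ(x-μ)/σ) ^ (1/γ))` (real power). -/
noncomputable def gevCdf (γ μ σ x : ℝ) : ℝ :=
  Real.exp (-(1 - γ * (x - μ) / σ) ^ (1 / γ))

/-- Extension of the model cdf `F` evaluated along the ordered sample
`x 1 < x 2 < ⋯ < x n`, using the conventions `F(x₀) ≡ 0` and `F(x_{n+1}) ≡ 1`:
the value at index `0` is `0`, at index `n+1` it is `1`, and at index `i`
(`1 ≤ i ≤ n`) it is `F (x i)`. -/
noncomputable def extCdfSeq (F : ℝ → ℝ) (n : ℕ) (x : ℕ → ℝ) (j : ℕ) : ℝ :=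
  if j = 0 then 0 else if j = n + 1 then 1 else F (x j)

/-- The maximum product of spacings (MPS) objective
`M = −∑_{i=1}^{n+1} log Dᵢ` where `Dᵢ = F(xᵢ) − F(x_{i−1})` are the spacings
of `F` at the ordered sample, with `F(x₀) ≡ 0` and `F(x_{n+1}) ≡ 1`. -/
noncomputable def mpsObjective (F : ℝ → ℝ) (n : ℕ) (x : ℕ → ℝ) : ℝ :=
  - ∑ i ∈ Finset.range (n + 1),
      Real.log (extCdfSeq F n x (i + 1) - extCdfSeq F n x i)

theorem gev_aux (γ σ : ℝ) (hγ : 0 < γ) (hσ : 0 < σ) (μ y : ℝ) (h : y - σ / γ < μ) :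
    gevCdf γ μ σ y < 1 := by
  unfold gevCdf
  rw [Real.exp_lt_one_iff, neg_lt_zero]
  apply Real.rpow_pos_of_pos
  rw [sub_pos, div_lt_one hσ]
  have : y - μ < σ / γ := by linarith
  rw [lt_div_iff₀ hγ] at this
  linarith

/-- Fix `γ > 0`, `σ > 0` and an ordered sample `x 1 < x 2 < ⋯ < x n`. As `μ`
decreases to `x n − σ/γ` (equivalently, as the upper endpoint `μ + σ/γ`
decreases to the largest observation `x n`), the MPS objective for the GEV
tends to `+∞`; hence the MPS objective does not collapse at the boundary of
the parameter space. -/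
theorem gev_mps_objective_tendsto_atTop (γ σ : ℝ) (hγ : 0 < γ) (hσ : 0 < σ)
    (n : ℕ) (hn : 1 ≤ n) (x : ℕ → ℝ) (hx : StrictMonoOn x (Set.Icc 1 n)) :
    Filter.Tendsto (fun μ => mpsObjective (gevCdf γ μ σ) n x)
      (nhdsWithin (x n - σ / γ) (Set.Ioi (x n - σ / γ))) Filter.atTop := by
  have key : Filter.Tendsto (fun μ => - Real.log (1 - gevCdf γ μ σ (x n)))
      (nhdsWithin (x n - σ / γ) (Set.Ioi (x n - σ / γ))) Filter.atTop := by
    apply Filter.tendsto_neg_atBot_atTop.comp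
    apply Real.tendsto_log_nhdsGT_zero.comp
    apply tendsto_nhdsWithin_of_tendsto_nhds_of_eventually_within
    · apply Filter.Tendsto.mono_left _ nhdsWithin_le_nhds
      have hc : ContinuousAt (fun μ => 1 - gevCdf γ μ σ (x n)) (x n - σ / γ) := by
        unfold gevCdf
        apply ContinuousAt.sub continuousAt_const
        apply Real.continuous_exp.continuousAt.comp
        apply ContinuousAt.neg
        apply ContinuousAt.rpow_const
        · fun_prop
        · right; positivity
      have h0 : 1 - gevCdf γ (x n - σ / γ) σ (x n) = 0 := by
        have h1 : 1 - γ * (x n - (x n - σ / γ)) / σ = 0 := by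
          field_simp
          ring
        unfold gevCdf
        rw [h1, Real.zero_rpow (by positivity)]
        simp
      have := hc.tendsto
      rwa [h0] at this
    · filter_upwards [self_mem_nhdsWithin] with μ hμ
      have := gev_aux γ σ hγ hσ μ (x n) hμ
      simp only [Set.mem_Ioi]
      linarith
  refine Filter.tendsto_atTop_mono' _ ?_ key
  filter_upwards [self_mem_nhdsWithin] with μ hμ
  have hμ' : x n - σ / γ < μ := hμ
  have hb : ∀ j, j ≤ n + 1 → 0 ≤ extCdfSeq (gevCdf γ μ σ) n x j ∧
      extCdfSeq (gevCdf γ μ σ) n x j ≤ 1 := by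
    intro j hj
    unfold extCdfSeq
    split_ifs with h1 h2
    · simp
    · simp
    · have hle : x j ≤ x n := hx.monotoneOn ⟨by omega, by omega⟩ ⟨hn, le_rfl⟩ (by omega)
      exact ⟨(Real.exp_pos _).le, (gev_aux γ σ hγ hσ μ (x j) (by linarith)).le⟩
  unfold mpsObjective
  rw [Finset.sum_range_succ]
  have hs : ∑ i ∈ Finset.range n, Real.log (extCdfSeq (gevCdf γ μ σ) n x (i + 1) -
      extCdfSeq (gevCdf γ μ σ) n x i) ≤ 0 := by
    apply Finset.sum_nonpos
    intro i hi
    have hi' := Finset.mem_range.1 hi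
    have h1 := hb i (by omega)
    have h2 := hb (i + 1) (by omega)
    rw [← Real.log_abs]
    apply Real.log_nonpos (abs_nonneg _)
    rw [abs_le]
    constructor <;> linarith
  have hl : extCdfSeq (gevCdf γ μ σ) n x (n + 1) - extCdfSeq (gevCdf γ μ σ) n x n
      = 1 - gevCdf γ μ σ (x n) := by
    unfold extCdfSeq
    simp [show n ≠ 0 by omega]
  rw [hl]
  linarith
end

section
/- Fix γ > 0 and an ordered sample 0 < x_1 < x_2 < ⋯ < x_n of reals. As σ decreases to γ·x_n (equivalently, as the upper endpoint σ/γ decreases to the largest observation x_n), the maximum product of spacings objective for the GPD, M(γ, σ) = −∑_{i=1}^{n+1} log[G(x_i; γ, σ) − G(x_{i−1}; γ, σ)] with G(x_0) ≡ 0 and G(x_{n+1}) ≡ 1, tends to +∞; hence the MPS objective does not collapse at the boundary of the parameter space. -/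
/-- The cdf of the generalized Pareto distribution (GPD):
`G(x) = 1 - (1 - γx/σ) ^ (1/γ)` (real power). -/
noncomputable def gpdCdf (γ σ x : ℝ) : ℝ :=
  1 - (1 - γ * x / σ) ^ (1 / γ)

theorem gpd_ext_mem (γ : ℝ) (hγ : 0 < γ)
    (n : ℕ) (x : ℕ → ℝ) (hx0 : 0 < x 1)
    (hx : StrictMonoOn x (Set.Icc 1 n)) (σ : ℝ) (hσ : γ * x n < σ) (j : ℕ) (hj : j ≤ n + 1) :
    0 ≤ extCdfSeq (gpdCdf γ σ) n x j ∧ extCdfSeq (gpdCdf γ σ) n x j ≤ 1 := by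
  unfold extCdfSeq
  split_ifs with h0 h1
  · simp
  · simp
  · have h1j : 1 ≤ j := by omega
    have hjn : j ≤ n := by omega
    have ha : x 1 ≤ x j := hx.monotoneOn ⟨le_refl _, by omega⟩ ⟨h1j, hjn⟩ h1j
    have hb : x j ≤ x n := hx.monotoneOn ⟨h1j, hjn⟩ ⟨by omega, le_refl _⟩ hjn
    have hc : γ * x j ≤ γ * x n := mul_le_mul_of_nonneg_left hb hγ.le
    have hd : 0 < γ * x j := mul_pos hγ (by linarith)
    have hσ0 : 0 < σ := by linarith
    have he : γ * x j / σ ≤ 1 := by rw [div_le_one hσ0]; linarith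
    have hf : 0 < γ * x j / σ := div_pos hd hσ0
    have h2 : 0 ≤ (1 - γ * x j / σ) ^ (1 / γ) := Real.rpow_nonneg (by linarith) _
    have h3 : (1 - γ * x j / σ) ^ (1 / γ) ≤ 1 :=
      Real.rpow_le_one (by linarith) (by linarith) (by positivity)
    unfold gpdCdf
    constructor <;> linarith

/-- Fix `γ > 0` and an ordered sample `0 < x 1 < x 2 < ⋯ < x n`. As `σ`
decreases to `γ · x n` (equivalently, as the upper endpoint `σ/γ` decreases to
the largest observation `x n`), the MPS objective for the GPD tends to `+∞`;
hence the MPS objective does not collapse at the boundary of the parameter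
space. -/
theorem gpd_mps_objective_tendsto_atTop (γ : ℝ) (hγ : 0 < γ)
    (n : ℕ) (hn : 1 ≤ n) (x : ℕ → ℝ) (hx0 : 0 < x 1)
    (hx : StrictMonoOn x (Set.Icc 1 n)) :
    Filter.Tendsto (fun σ => mpsObjective (gpdCdf γ σ) n x)
      (nhdsWithin (γ * x n) (Set.Ioi (γ * x n))) Filter.atTop := by
  have hxn : 0 < x n := lt_of_lt_of_le hx0
    (hx.monotoneOn ⟨le_refl _, hn⟩ ⟨hn, le_refl _⟩ hn)
  have hpos : 0 < γ * x n := mul_pos hγ hxn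
  have key : Filter.Tendsto (fun σ => -Real.log ((1 - γ * x n / σ) ^ (1 / γ)))
      (nhdsWithin (γ * x n) (Set.Ioi (γ * x n))) Filter.atTop := by
    have h1 : Filter.Tendsto (fun σ => 1 - γ * x n / σ)
        (nhdsWithin (γ * x n) (Set.Ioi (γ * x n))) (nhdsWithin 0 (Set.Ioi 0)) := by
      apply tendsto_nhdsWithin_of_tendsto_nhds_of_eventually_within
      · have hc : ContinuousAt (fun σ : ℝ => 1 - γ * x n / σ) (γ * x n) :=
          continuousAt_const.sub (continuousAt_const.div continuousAt_id hpos.ne')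
        have := hc.tendsto
        simp only [div_self hpos.ne', sub_self] at this
        exact this.mono_left nhdsWithin_le_nhds
      · filter_upwards [self_mem_nhdsWithin] with σ hσ
        have hσ' : γ * x n < σ := hσ
        have : γ * x n / σ < 1 := by rw [div_lt_one (by linarith)]; exact hσ'
        exact sub_pos.mpr this
    have h2 := Real.tendsto_log_nhdsGT_zero.comp h1
    have h3 := (Filter.tendsto_neg_atBot_atTop.comp h2).const_mul_atTop
      (show 0 < 1 / γ by positivity)
    refine h3.congr' ?_
    filter_upwards [self_mem_nhdsWithin] with σ hσ
    have hσ' : γ * x n < σ := hσ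
    have : γ * x n / σ < 1 := by rw [div_lt_one (by linarith)]; exact hσ'
    rw [Real.log_rpow (sub_pos.mpr this)]
    simp
  refine Filter.tendsto_atTop_mono' _ ?_ key
  filter_upwards [self_mem_nhdsWithin] with σ hσ
  unfold mpsObjective
  rw [Finset.sum_range_succ]
  have hlast : extCdfSeq (gpdCdf γ σ) n x (n + 1) - extCdfSeq (gpdCdf γ σ) n x n
      = (1 - γ * x n / σ) ^ (1 / γ) := by
    have : n ≠ 0 := by omega
    simp [extCdfSeq, gpdCdf, this]
  rw [hlast]
  have hsum : ∑ i ∈ Finset.range n,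
      Real.log (extCdfSeq (gpdCdf γ σ) n x (i + 1) - extCdfSeq (gpdCdf γ σ) n x i) ≤ 0 := by
    apply Finset.sum_nonpos
    intro i hi
    rw [Finset.mem_range] at hi
    have h1 := gpd_ext_mem γ hγ n x hx0 hx σ hσ i (by omega)
    have h2 := gpd_ext_mem γ hγ n x hx0 hx σ hσ (i + 1) (by omega)
    rw [← Real.log_abs]
    apply Real.log_nonpos (abs_nonneg _)
    rw [abs_le]
    constructor <;> linarith
  linarith
end
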